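/- Let C₂ be a Cantor set in ℝ³ contained in the closed unit ball centered at (2,0,0) with (1,0,0) ∈ C₂, and let A be the straight segment from (-1,0,0) to (1,0,0). Let V = {p ∈ ℝ³ : p₀ > -1} \ (C₂ ∪ A). If ℝ³ \ C₂ is simply connected, then V is simply connected. -/

import Mathlib

open Metric Set

noncomputable section

/-- ℝ³ as Euclidean space. -/
abbrev R3 : Type := EuclideanSpace ℝ (Fin 3)

/-- The point (a, b, c) of ℝ³. -/
def pt (a b c : ℝ) : R3 := (WithLp.equiv 2 (Fin 3 → ℝ)).symm ![a, b, c]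

/-- A Cantor set in ℝ³: a nonempty compact perfect totally disconnected subset. -/
def IsCantorSubset (C : Set R3) : Prop :=
  C.Nonempty ∧ IsCompact C ∧ Perfect C ∧ IsTotallyDisconnected C


/-- The straight segment from (-1,0,0) to (1,0,0). -/
def segA : Set R3 := segment ℝ (pt (-1) 0 0) (pt 1 0 0)

/-!
Write `a = (1,0,0)`. The set `C₂` meets the half-space `{p₀ ≤ 1}` only in `a`, and `V` contains no
point of the axis with `p₀ ≤ 1`; so pushing the points with `p₀ < 1` to the right, parallel to the
axis, deforms `V` onto `{p₀ ≥ 1} \ C₂` without ever meeting `C₂ ∪ A`. That set is a retract of the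
simply connected `ℝ³ \ C₂`: reflect the points with `p₀ < 1` in the plane `{p₀ = 1}`, then stretch
them away from `a` far enough to leave the ball containing `C₂`.
-/

open scoped RealInnerProductSpace unitInterval ContinuousMap

section Retract

variable {X Y : Type*} [TopologicalSpace X] [TopologicalSpace Y]

theorem simplyConnectedSpace_of_leftInverse [SimplyConnectedSpace X] (r : C(X, Y)) (i : C(Y, X))
    (h : Function.LeftInverse r i) : SimplyConnectedSpace Y := by
  rw [simply_connected_iff_loops_nullhomotopic]
  refine ⟨h.surjective.pathConnectedSpace r.continuous, fun y γ => ?_⟩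
  have null : (γ.map i.continuous).Homotopic (.refl (i y)) :=
    SimplyConnectedSpace.paths_homotopic _ _
  convert (null.map r).pathCast (h y).symm (h y).symm using 1 <;> ext <;> simp [h _]

theorem isSimplyConnected_of_retraction {s t : Set X} (hs : IsSimplyConnected s) (hts : t ⊆ s)
    {r : X → X} (hr : ContinuousOn r s) (hrt : MapsTo r s t) (hfix : EqOn r id t) :
    IsSimplyConnected t :=
  have := hs.simplyConnectedSpace
  simplyConnectedSpace_of_leftInverse ⟨hrt.restrict, hr.mapsToRestrict hrt⟩
    ⟨inclusion hts, continuous_inclusion hts⟩ fun p => Subtype.ext (hfix p.2)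

/-- The homotopy equivalence given by a deformation retraction `F` of `s` onto `t`. -/
def homotopyEquivOfDeformation {s t : Set X} (hts : t ⊆ s) (F : I → X → X)
    (hF : ContinuousOn (Function.uncurry F) (univ ×ˢ s)) (hFs : ∀ u, MapsTo (F u) s s)
    (h₀ : EqOn (F 0) id s) (h₁ : MapsTo (F 1) s t) (hfix : EqOn (F 1) id t) : s ≃ₕ t where
  toFun := ⟨h₁.restrict, ContinuousOn.mapsToRestrict
    (hF.comp (f := fun p => (1, p)) (by fun_prop) fun _ hp => ⟨mem_univ _, hp⟩) h₁⟩
  invFun := ⟨inclusion hts, continuous_inclusion hts⟩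
  left_inv := .symm ⟨{
    toFun := fun q => ⟨F q.1 q.2, hFs q.1 q.2.2⟩
    continuous_toFun := .subtype_mk
      (hF.comp_continuous (f := fun q : I × s => (q.1, (q.2 : X))) (by fun_prop)
        fun q => ⟨mem_univ _, q.2.2⟩) _
    map_zero_left := fun p => Subtype.ext (h₀ p.2)
    map_one_left := fun _ => rfl }⟩
  right_inv := by
    convert ContinuousMap.Homotopic.refl _
    ext p
    exact (hfix p.2).symm

end Retract

section HalfSpace

variable {E : Type*} [NormedAddCommGroup E] [InnerProductSpace ℝ E]
  {a e p : E} {r s t : ℝ} {C : Set E}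

/-- The translate of `p` along `e` by `t` times its depth below the hyperplane
`⟪e, · - a⟫ = 0`. For a unit vector `e` and `t = 0, 1, 2` this is the identity, the projection onto
the half-space `0 ≤ ⟪e, · - a⟫`, and the folding of the space onto it. -/
def pushUp (a e : E) (t : ℝ) (p : E) : E :=
  p + (t * ⟪e, p - a⟫⁻) • e

@[simp]
theorem pushUp_zero : pushUp a e 0 p = p := by
  simp [pushUp]

theorem pushUp_of_nonneg (h : 0 ≤ ⟪e, p - a⟫) : pushUp a e t p = p := by
  simp [pushUp, negPart_eq_zero.2 h]

theorem pushUp_of_nonpos (h : ⟪e, p - a⟫ ≤ 0) :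
    pushUp a e t p = p - (t * ⟪e, p - a⟫) • e := by
  rw [pushUp, negPart_eq_neg.2 h, mul_neg, neg_smul, ← sub_eq_add_neg p]

theorem continuous_pushUp : Continuous fun q : ℝ × E => pushUp a e q.1 q.2 := by
  have := continuous_negPart (α := ℝ)
  unfold pushUp
  fun_prop

theorem inner_pushUp_sub (he : ‖e‖ = 1) :
    ⟪e, pushUp a e t p - a⟫ = ⟪e, p - a⟫ + t * ⟪e, p - a⟫⁻ := by
  rw [pushUp, add_sub_right_comm, inner_add_right, real_inner_smul_right,
    real_inner_self_eq_norm_sq, he, one_pow, mul_one]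

theorem inner_pushUp_one_sub_nonneg (he : ‖e‖ = 1) : 0 ≤ ⟪e, pushUp a e 1 p - a⟫ := by
  rw [inner_pushUp_sub he]
  linarith [neg_le_negPart ⟪e, p - a⟫]

theorem norm_pushUp_two_sub (he : ‖e‖ = 1) : ‖pushUp a e 2 p - a‖ = ‖p - a‖ := by
  rcases le_total 0 ⟪e, p - a⟫ with h | h
  · rw [pushUp_of_nonneg h]
  · rw [← sq_eq_sq₀ (norm_nonneg _) (norm_nonneg _), pushUp_of_nonpos h, sub_right_comm,
      norm_sub_sq_real, real_inner_smul_right, norm_smul, he, real_inner_comm, mul_one,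
      Real.norm_eq_abs, sq_abs]
    ring

/-- The folding `pushUp a e 2`, followed by a stretching from `a` that moves the reflected points
out of the ball of radius `r` and centre `a + r • e`: scaling `v` by `k` leaves the ball
`‖v‖ ^ 2 ≤ 2 * r * ⟪e, v⟫` as soon as `k > 2 * r * ⟪e, v⟫ / ‖v‖ ^ 2`. -/
def foldOut (a e : E) (r : ℝ) (p : E) : E :=
  a + (1 + 2 * r * ⟪e, p - a⟫⁻ / ‖p - a‖ ^ 2) • (pushUp a e 2 p - a)

theorem foldOut_of_nonneg (h : 0 ≤ ⟪e, p - a⟫) : foldOut a e r p = p := by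
  simp [foldOut, pushUp_of_nonneg h, negPart_eq_zero.2 h]

theorem continuousOn_foldOut : ContinuousOn (foldOut a e r) {a}ᶜ := by
  have := continuous_negPart (α := ℝ)
  have hpush : Continuous (pushUp a e 2) :=
    continuous_pushUp.comp (Continuous.prodMk_right 2)
  have hne : ∀ p ∈ ({a}ᶜ : Set E), ‖p - a‖ ^ 2 ≠ 0 := fun p hp =>
    pow_ne_zero 2 (norm_ne_zero_iff.2 (sub_ne_zero.2 hp))
  unfold foldOut
  fun_prop (disch := assumption)

theorem mem_closedBall_add_smul_iff (he : ‖e‖ = 1) (hr : 0 ≤ r) :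
    p ∈ closedBall (a + r • e) r ↔ ‖p - a‖ ^ 2 ≤ 2 * r * ⟪e, p - a⟫ := by
  rw [mem_closedBall, dist_eq_norm, ← sq_le_sq₀ (norm_nonneg _) hr, ← sub_sub, norm_sub_sq_real,
    real_inner_smul_right, norm_smul, he, mul_one, Real.norm_eq_abs, sq_abs, real_inner_comm]
  constructor <;> intro h <;> linarith

theorem inner_foldOut_sub_nonneg (he : ‖e‖ = 1) (hr : 0 ≤ r) :
    0 ≤ ⟪e, foldOut a e r p - a⟫ := by
  have hfold : 0 ≤ ⟪e, pushUp a e 2 p - a⟫ := by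
    rw [inner_pushUp_sub he]
    linarith [neg_le_negPart ⟪e, p - a⟫, negPart_nonneg ⟪e, p - a⟫]
  rw [foldOut, add_sub_cancel_left, real_inner_smul_right]
  have := negPart_nonneg ⟪e, p - a⟫
  positivity

theorem foldOut_notMem_closedBall (he : ‖e‖ = 1) (hp : ⟪e, p - a⟫ < 0) :
    foldOut a e r p ∉ closedBall (a + r • e) r := by
  rcases lt_or_ge r 0 with hr | hr
  · simp [closedBall_eq_empty.2 hr]
  rw [mem_closedBall_add_smul_iff he hr, not_le, foldOut, add_sub_cancel_left,
    real_inner_smul_right, inner_pushUp_sub he, norm_smul, norm_pushUp_two_sub he, mul_pow,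
    Real.norm_eq_abs, sq_abs, negPart_eq_neg.2 hp.le]
  have hpa : 0 < ‖p - a‖ := norm_pos_iff.2 fun h => by simp [h] at hp
  set d := -⟪e, p - a⟫ with hd
  set k := 1 + 2 * r * d / ‖p - a‖ ^ 2 with hk
  have hk₀ : 0 < k := by
    have : 0 < d := neg_pos.2 hp
    positivity
  have hk_norm : k * ‖p - a‖ ^ 2 = ‖p - a‖ ^ 2 + 2 * r * d := by
    rw [hk]
    field_simp
  calc 2 * r * (k * (⟪e, p - a⟫ + 2 * d)) = k * (2 * r * d) := by rw [hd]; ring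
    _ < k * (‖p - a‖ ^ 2 + 2 * r * d) := by
      gcongr
      linarith [pow_pos hpa 2]
    _ = k ^ 2 * ‖p - a‖ ^ 2 := by rw [← hk_norm]; ring

theorem isSimplyConnected_halfSpace_diff (he : ‖e‖ = 1) (hC : C ⊆ closedBall (a + r • e) r)
    (ha : a ∈ C) (hsc : IsSimplyConnected Cᶜ) :
    IsSimplyConnected ({p | 0 ≤ ⟪e, p - a⟫} \ C) := by
  have hr : 0 ≤ r := nonempty_closedBall.1 ⟨a, hC ha⟩
  refine isSimplyConnected_of_retraction (r := foldOut a e r) hsc (fun p hp => hp.2)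
    (continuousOn_foldOut.mono (compl_subset_compl.2 (singleton_subset_iff.2 ha)))
    (fun p hp => ⟨inner_foldOut_sub_nonneg he hr, ?_⟩) fun p hp => foldOut_of_nonneg hp.1
  rcases le_or_gt 0 ⟪e, p - a⟫ with h | h
  · rwa [foldOut_of_nonneg h]
  · exact fun hfold => foldOut_notMem_closedBall he h (hC hfold)

theorem eq_of_mem_closedBall_of_inner_nonpos (he : ‖e‖ = 1)
    (hp : p ∈ closedBall (a + r • e) r) (h : ⟪e, p - a⟫ ≤ 0) : p = a := by
  have hr : 0 ≤ r := nonempty_closedBall.1 ⟨p, hp⟩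
  rw [mem_closedBall_add_smul_iff he hr] at hp
  have hnorm : ‖p - a‖ ^ 2 ≤ 0 := hp.trans (mul_nonpos_of_nonneg_of_nonpos (by positivity) h)
  simpa [sub_eq_zero] using hnorm.antisymm (sq_nonneg _)

theorem segment_add_smul_eq_image (hs : s ≤ 0) :
    segment ℝ (a + s • e) a = (fun x : ℝ => a + x • e) '' Icc s 0 := by
  have hline : (fun x : ℝ => a + x • e) = AffineMap.lineMap a (a + e) := by
    ext x
    simp [AffineMap.lineMap_apply, add_comm]
  rw [hline, ← segment_eq_Icc hs, image_segment]
  simp [← hline]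

theorem halfSpace_diff_subset_diff_union_segment (he : ‖e‖ = 1) (hs : s < 0) (ha : a ∈ C) :
    {p | 0 ≤ ⟪e, p - a⟫} \ C ⊆ {p | s < ⟪e, p - a⟫} \ (C ∪ segment ℝ (a + s • e) a) := by
  rintro p ⟨hp, hpC⟩
  refine ⟨hs.trans_le hp, ?_⟩
  rw [segment_add_smul_eq_image hs.le]
  rintro (h | ⟨x, hx, rfl⟩)
  · exact hpC h
  · have hx₀ : 0 ≤ x := by simpa [real_inner_smul_right, he] using hp
    exact hpC (by simpa [hx.2.antisymm hx₀] using ha)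

theorem mem_segment_of_pushUp_mem_segment (he : ‖e‖ = 1) (hsp : s ≤ ⟪e, p - a⟫)
    (hp : ⟪e, p - a⟫ ≤ 0) (h : pushUp a e t p ∈ segment ℝ (a + s • e) a) :
    p ∈ segment ℝ (a + s • e) a := by
  rw [segment_add_smul_eq_image (hsp.trans hp)] at h ⊢
  obtain ⟨x, -, hx⟩ := h
  have haxis : p = a + (x + t * ⟪e, p - a⟫) • e := by
    rw [add_smul, ← add_assoc, ← sub_eq_iff_eq_add, ← pushUp_of_nonpos hp]
    exact hx.symm
  have hinner : ⟪e, p - a⟫ = x + t * ⟪e, p - a⟫ := by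
    conv_lhs => rw [haxis, add_sub_cancel_left, real_inner_smul_right,
      real_inner_self_eq_norm_sq, he, one_pow, mul_one]
  exact ⟨⟪e, p - a⟫, ⟨hsp, hp⟩, (haxis.trans (by rw [← hinner])).symm⟩

theorem pushUp_mem_diff_union_segment (he : ‖e‖ = 1) (hC : ∀ q ∈ C, ⟪e, q - a⟫ ≤ 0 → q = a)
    (ht : t ∈ I) (hp : p ∈ {p | s < ⟪e, p - a⟫} \ (C ∪ segment ℝ (a + s • e) a)) :
    pushUp a e t p ∈ {p | s < ⟪e, p - a⟫} \ (C ∪ segment ℝ (a + s • e) a) := by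
  obtain ⟨hsp : s < ⟪e, p - a⟫, hnotMem⟩ := hp
  refine ⟨show s < ⟪e, pushUp a e t p - a⟫ from ?_, fun hmem => ?_⟩
  · rw [inner_pushUp_sub he]
    linarith [mul_nonneg ht.1 (negPart_nonneg ⟪e, p - a⟫)]
  rcases le_total 0 ⟪e, p - a⟫ with h | h
  · exact hnotMem (by rwa [pushUp_of_nonneg h] at hmem)
  have hbelow : ⟪e, pushUp a e t p - a⟫ ≤ 0 := by
    rw [inner_pushUp_sub he, negPart_eq_neg.2 h]
    linarith [mul_nonpos_of_nonneg_of_nonpos (sub_nonneg.2 ht.2) h]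
  refine hnotMem (.inr (mem_segment_of_pushUp_mem_segment he hsp.le h (t := t) ?_))
  rcases hmem with hpC | hseg
  · rw [hC _ hpC hbelow]
    exact right_mem_segment ℝ _ _
  · exact hseg

theorem isSimplyConnected_halfSpace_diff_union_segment (he : ‖e‖ = 1) (hs : s < 0) (ha : a ∈ C)
    (hC : ∀ q ∈ C, ⟪e, q - a⟫ ≤ 0 → q = a)
    (hsc : IsSimplyConnected ({p | 0 ≤ ⟪e, p - a⟫} \ C)) :
    IsSimplyConnected ({p | s < ⟪e, p - a⟫} \ (C ∪ segment ℝ (a + s • e) a)) := by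
  have := hsc.simplyConnectedSpace
  have hpush (u : I) := fun p hp =>
    pushUp_mem_diff_union_segment (p := p) (s := s) he hC u.2 hp
  have hcont : Continuous fun q : I × E => pushUp a e q.1 q.2 :=
    continuous_pushUp.comp (f := fun q : I × E => ((q.1 : ℝ), q.2)) (by fun_prop)
  exact (homotopyEquivOfDeformation (halfSpace_diff_subset_diff_union_segment he hs ha)
    (fun u => pushUp a e u) hcont.continuousOn hpush (fun _ _ => pushUp_zero)
    (fun p hp => ⟨inner_pushUp_one_sub_nonneg he, fun h => (hpush 1 p hp).2 (.inl h)⟩)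
    fun p hp => pushUp_of_nonneg hp.1).simplyConnectedSpace

theorem stmt_14_general (he : ‖e‖ = 1) (hs : s < 0) (hC : C ⊆ closedBall (a + r • e) r)
    (ha : a ∈ C) (hsc : SimplyConnectedSpace ↥(Cᶜ)) :
    SimplyConnectedSpace ↥({p | s < ⟪e, p - a⟫} \ (C ∪ segment ℝ (a + s • e) a)) :=
  isSimplyConnected_halfSpace_diff_union_segment he hs ha
    (fun _ hq => eq_of_mem_closedBall_of_inner_nonpos he (hC hq))
    (isSimplyConnected_halfSpace_diff he hC ha hsc)

end HalfSpace

theorem pt_add_smul_single (x y : ℝ) :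
    pt x 0 0 + y • EuclideanSpace.single 0 1 = pt (x + y) 0 0 := by
  ext i
  fin_cases i <;> simp [pt]

theorem setOf_lt_inner_single_sub_pt (s x : ℝ) :
    {p : R3 | s < ⟪EuclideanSpace.single 0 1, p - pt x 0 0⟫} = {p | p 0 > x + s} := by
  ext p
  simp [EuclideanSpace.inner_single_left, pt, lt_sub_iff_add_lt']

/-- If ℝ³ \ C₂ is simply connected, then the open half-space {x > -1} minus `C₂ ∪ A`
is simply connected. -/
theorem stmt_14 (C₂ : Set R3) (h₂ : IsCantorSubset C₂)
    (hB : C₂ ⊆ closedBall (pt 2 0 0) 1) (hx : pt 1 0 0 ∈ C₂)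
    (hsc : SimplyConnectedSpace ↥(C₂ᶜ)) :
    SimplyConnectedSpace ↥({p : R3 | p 0 > -1} \ (C₂ ∪ segA)) := by
  have h := stmt_14_general (a := pt 1 0 0) (e := EuclideanSpace.single 0 1) (r := 1) (s := -2)
    (by simp) (by norm_num) (by rwa [pt_add_smul_single, one_add_one_eq_two]) hx hsc
  rwa [setOf_lt_inner_single_sub_pt, pt_add_smul_single, show (1 : ℝ) + -2 = -1 by norm_num] at h
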